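/- Fix an integer a ≥ 2. Then the limit lim_{q→∞} (χ_sc(K_{a,q}) − 2q)/√q exists (as a finite real number). -/

import Mathlib

/-!
Write `χ(q)` for the sum choice number of `K_{a,q}`, and let `g(q)` be the least value of `∑ h` over
those `h : Fin a → ℕ` for which the function equal to `h` on `A` and to `2` on all of `Q` is
sufficient. With two-element lists on `Q` seen as the edges of a graph on the colors, sufficiency
says that any `q` edges leave some transversal of the lists on `A` independent (`Good`). The theorem
follows from three comparisons.

* Blow-up (`Good.of_blowup`, `mul_cost_le`): replacing each color by `k` copies, and each edge by a
  `K_{k,k}`, shows `k * g(q) ≤ g(k²q) + k * a`. Since `g` is monotone, this is a superadditivity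
  property of Fekete type for `g(q) / √q`.
* Greedy coloring (`good_const`, `exists_cost_bound`): `g(q) = O(√q)`, because only `O(√q)` colors
  have degree above `√q`, and among the remaining ones a transversal can be picked one color at a
  time.
* Reduction to lists of size two (`exists_good_of_choosable`): `χ(q) ≤ 2q + g(q)`, and there is
  `d ≤ q` with `2q + d + g(q - d) ≤ χ(q)`. Vertices of `Q` with at least three colors are dropped,
  each at a gain of one. Vertices of `Q` with a single color can be used to delete a common color
  from all the lists on `A`; as `a ≥ 2`, dropping them together with these colors also gains at least
  one each.

With `S = sup_q (g(q) - a) / √q`, finite by the greedy bound, the first upper bound gives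
`χ(q) - 2q ≤ S√q + a`. In the lower bound `d = O(√q)`, so `√(q - d) = √q - O(1)`, and the blow-up
inequality gives `χ(q) - 2q ≥ t√q - O(1)` for each `t = (g(r) - a) / √r`. Hence the limit is `S`.
-/

open SimpleGraph Finset

/-- A graph `G` is `f`-choosable (i.e. `f` is *sufficient*) if for every assignment of
finite lists of colors with `|L v| = f v` there is a proper coloring choosing colors
from the lists. -/
def Choosable {V : Type*} (G : SimpleGraph V) (f : V → ℕ) : Prop :=
  ∀ L : V → Finset ℕ, (∀ v, (L v).card = f v) →
    ∃ c : V → ℕ, (∀ v, c v ∈ L v) ∧ ∀ u v, G.Adj u v → c u ≠ c v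

/-- The sum choice number of a finite graph. -/
noncomputable def sumChoice {V : Type*} [Fintype V] (G : SimpleGraph V) : ℕ :=
  sInf {n : ℕ | ∃ f : V → ℕ, Choosable G f ∧ ∑ v, f v = n}

/-- The sum choice number of `K_{a,q}` restricted to type II functions, i.e. those with
`f(v) = 2` for every vertex `v` of the part `Q`. -/
noncomputable def sumChoice2 (a q : ℕ) : ℕ :=
  sInf {n : ℕ | ∃ f : Fin a ⊕ Fin q → ℕ,
    Choosable (completeBipartiteGraph (Fin a) (Fin q)) f ∧
    (∀ v : Fin q, f (Sum.inr v) = 2) ∧ ∑ v, f v = n}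

/-! ### Two-element lists as edges -/

/-- `Good h q`: for all color lists with at least `h i` colors on the `i`-th vertex of `A`, and
every loopless graph with at most `q` edges on the colors, some transversal of the lists spans no
edge. Edges are encoded as ordered pairs; the orientation plays no role. Asking for *at least* `h i`
colors and *at most* `q` edges makes monotonicity immediate. -/
def Good {a : ℕ} (h : Fin a → ℕ) (q : ℕ) : Prop :=
  ∀ L : Fin a → Finset ℕ, (∀ i, h i ≤ (L i).card) →
    ∀ E : Finset (ℕ × ℕ), E.card ≤ q → (∀ p ∈ E, p.1 ≠ p.2) →
      ∃ c : Fin a → ℕ, (∀ i, c i ∈ L i) ∧ ∀ p ∈ E, ¬((∃ i, c i = p.1) ∧ ∃ j, c j = p.2)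

/-- The least total list size on `A` that suffices when all `q` vertices of `Q` have lists of
size two. -/
noncomputable def cost (a q : ℕ) : ℕ :=
  sInf {n : ℕ | ∃ h : Fin a → ℕ, Good h q ∧ ∑ i, h i = n}

theorem Good.mono_right {a : ℕ} {h : Fin a → ℕ} {q r : ℕ} (H : Good h r) (hq : q ≤ r) :
    Good h q :=
  fun L hL E hE => H L hL E (hE.trans hq)

/-- From a bad instance with `q` edges, replacing every color `x` by the `k` copies
`x * k, …, x * k + (k - 1)` yields a bad instance with `q * k ^ 2` edges. -/
theorem Good.of_blowup {a : ℕ} {h h' : Fin a → ℕ} {q k : ℕ} (hk : 0 < k)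
    (H : Good h (q * k ^ 2)) (hh : ∀ i, h i ≤ h' i * k) : Good h' q := by
  intro L hL E hE hloop
  have key : ∀ x y i j : ℕ, i < k → j < k → x * k + i = y * k + j → x = y ∧ i = j := by
    intro x y i j hi hj hxy
    have h1 : (x * k + i) / k = x := by
      rw [add_comm, Nat.add_mul_div_right _ _ hk, Nat.div_eq_of_lt hi, zero_add]
    have h2 : (y * k + j) / k = y := by
      rw [add_comm, Nat.add_mul_div_right _ _ hk, Nat.div_eq_of_lt hj, zero_add]
    have h3 : x = y := by rw [← h1, ← h2, hxy]
    subst h3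
    exact ⟨rfl, by omega⟩
  obtain ⟨c, hc, hcE⟩ := H
    (fun i => (L i ×ˢ range k).image fun u => u.1 * k + u.2)
    (by
      intro i
      rw [card_image_of_injOn, card_product, card_range]
      · exact (hh i).trans (Nat.mul_le_mul_right k (hL i))
      · rintro ⟨x, s⟩ hx ⟨y, t⟩ hy hxy
        simp only [coe_product, Set.mem_prod, mem_coe, mem_range] at hx hy
        obtain ⟨h1, h2⟩ := key x y s t hx.2 hy.2 hxy
        rw [h1, h2])
    ((E ×ˢ (range k ×ˢ range k)).image
      fun u => (u.1.1 * k + u.2.1, u.1.2 * k + u.2.2))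
    (by
      refine card_image_le.trans ?_
      rw [card_product, card_product, card_range, ← sq]
      exact Nat.mul_le_mul_right _ hE)
    (by
      intro p hp
      simp only [mem_image, mem_product, mem_range] at hp
      obtain ⟨⟨p, s, t⟩, ⟨hp, hs, ht⟩, rfl⟩ := hp
      intro heq
      exact hloop p hp (key _ _ _ _ hs ht heq).1)
  refine ⟨fun i => c i / k, ?_, ?_⟩
  · intro i
    have := hc i
    simp only [mem_image, mem_product, mem_range] at this
    obtain ⟨⟨x, s⟩, ⟨hx, hs⟩, hxs⟩ := this
    have : c i / k = x := by
      rw [← hxs, add_comm, Nat.add_mul_div_right _ _ hk, Nat.div_eq_of_lt hs, zero_add]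
    simpa only [this] using hx
  · rintro p hp ⟨⟨i, hi⟩, j, hj⟩
    -- the copy of `p` joining the colors `c i` and `c j` themselves is an edge of the blow-up
    refine hcE (c i, c j) ?_ ⟨⟨i, rfl⟩, j, rfl⟩
    rw [mem_image]
    refine ⟨(p, (c i % k, c j % k)), ?_, ?_⟩
    · simp only [mem_product, mem_range]
      exact ⟨hp, Nat.mod_lt _ hk, Nat.mod_lt _ hk⟩
    · simp only [← hi, ← hj, Prod.mk.injEq]
      exact ⟨Nat.div_add_mod' _ _, Nat.div_add_mod' _ _⟩

/-! ### The greedy upper bound -/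

/-- Fewer than `s` colors have `s` or more of the fewer than `s ^ 2` edges over them. -/
theorem exists_high_degree_set (E : Finset (ℕ × ℕ)) (π : ℕ × ℕ → ℕ) {s : ℕ} (hE : E.card < s ^ 2) :
    ∃ B : Finset ℕ, B.card < s ∧ ∀ x, x ∉ B → (E.filter fun p => π p = x).card < s := by
  refine ⟨(E.image π).filter fun x => s ≤ (E.filter fun p => π p = x).card, ?_, ?_⟩
  · set B := (E.image π).filter fun x => s ≤ (E.filter fun p => π p = x).card with hB
    have h1 : B.card * s ≤ ∑ x ∈ B, (E.filter fun p => π p = x).card := by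
      rw [← smul_eq_mul]
      exact card_nsmul_le_sum _ _ _ fun x hx => (mem_filter.1 hx).2
    have h2 : ∑ x ∈ B, (E.filter fun p => π p = x).card ≤ E.card := by
      rw [card_eq_sum_card_image π E]
      exact sum_le_sum_of_subset (filter_subset _ _)
    by_contra! hcon
    nlinarith
  · intro x hx
    by_contra! hcon
    refine hx (mem_filter.2 ⟨?_, hcon⟩)
    have hs : 0 < s := by
      rcases Nat.eq_zero_or_pos s with rfl | h
      · simp at hE
      · exact h
    obtain ⟨p, hp⟩ := card_pos.1 (hs.trans_le hcon)
    rw [mem_filter] at hp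
    exact mem_image.2 ⟨p, hp.1, hp.2⟩

theorem good_const (a : ℕ) {q s : ℕ} (hs : q < s ^ 2) :
    Good (fun _ : Fin a => (2 + 2 * a) * s) q := by
  intro L hL E hE hloop
  obtain ⟨B₁, hB₁, hd₁⟩ := exists_high_degree_set E Prod.fst (hE.trans_lt hs)
  obtain ⟨B₂, hB₂, hd₂⟩ := exists_high_degree_set E Prod.snd (hE.trans_lt hs)
  let N : ℕ → Finset ℕ := fun x =>
    (E.filter fun p => p.1 = x).image Prod.snd ∪ (E.filter fun p => p.2 = x).image Prod.fst
  have hN : ∀ x, x ∉ B₁ ∪ B₂ → (N x).card ≤ 2 * s := by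
    intro x hx
    rw [mem_union, not_or] at hx
    have h1 := hd₁ x hx.1
    have h2 := hd₂ x hx.2
    have h3 := card_union_le ((E.filter fun p => p.1 = x).image Prod.snd)
      ((E.filter fun p => p.2 = x).image Prod.fst)
    have h4 := card_image_le (s := E.filter fun p => p.1 = x) (f := Prod.snd)
    have h5 := card_image_le (s := E.filter fun p => p.2 = x) (f := Prod.fst)
    change ((E.filter fun p => p.1 = x).image Prod.snd ∪
      (E.filter fun p => p.2 = x).image Prod.fst).card ≤ 2 * s
    omega
  have greedy : ∀ T : Finset (Fin a), ∃ c : Fin a → ℕ,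
      (∀ i ∈ T, c i ∈ L i ∧ c i ∉ B₁ ∪ B₂) ∧
      ∀ p ∈ E, ¬((∃ i ∈ T, c i = p.1) ∧ ∃ j ∈ T, c j = p.2) := by
    intro T
    induction T using Finset.induction_on with
    | empty => exact ⟨fun _ => 0, by simp, by simp⟩
    | insert i T hi ih =>
      obtain ⟨c, hc, hcE⟩ := ih
      have hbad : ((B₁ ∪ B₂) ∪ T.biUnion fun j => N (c j)).card < (L i).card := by
        have h1 := card_union_le (B₁ ∪ B₂) (T.biUnion fun j => N (c j))
        have h2 := card_union_le B₁ B₂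
        have h3 : (T.biUnion fun j => N (c j)).card ≤ T.card * (2 * s) :=
          card_biUnion_le_card_mul _ _ _ fun j hj => hN _ (hc j hj).2
        have h4 : T.card ≤ a := by simpa using card_le_univ T
        have h5 := Nat.mul_le_mul_right (2 * s) h4
        have h6 := hL i
        have h7 : (2 + 2 * a) * s = 2 * s + a * (2 * s) := by ring
        simp only [h7] at h6
        omega
      obtain ⟨x, hxL, hx⟩ := exists_mem_notMem_of_card_lt_card hbad
      rw [mem_union, not_or] at hx
      have hxN : ∀ j ∈ T, x ∉ N (c j) := fun j hj hxj => hx.2 (mem_biUnion.2 ⟨j, hj, hxj⟩)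
      have hne : ∀ j ∈ T, j ≠ i := fun j hj e => hi (e ▸ hj)
      refine ⟨Function.update c i x, ?_, ?_⟩
      · intro j hj
        rcases mem_insert.1 hj with rfl | hj
        · simpa using ⟨hxL, by simpa using hx.1⟩
        · rw [Function.update_of_ne (hne j hj)]
          exact hc j hj
      · rintro p hp ⟨⟨j, hj, hjp⟩, l, hl, hlp⟩
        rcases mem_insert.1 hj with rfl | hj' <;> rcases mem_insert.1 hl with rfl | hl'
        · exact hloop p hp (hjp.symm.trans hlp)
        · rw [Function.update_self] at hjp
          rw [Function.update_of_ne (hne l hl')] at hlp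
          refine hxN l hl' (mem_union_right _ (mem_image.2 ⟨p, ?_, hjp.symm⟩))
          exact mem_filter.2 ⟨hp, hlp.symm⟩
        · rw [Function.update_self] at hlp
          rw [Function.update_of_ne (hne j hj')] at hjp
          refine hxN j hj' (mem_union_left _ (mem_image.2 ⟨p, ?_, hlp.symm⟩))
          exact mem_filter.2 ⟨hp, hjp.symm⟩
        · rw [Function.update_of_ne (hne j hj')] at hjp
          rw [Function.update_of_ne (hne l hl')] at hlp
          exact hcE p hp ⟨⟨j, hj', hjp⟩, l, hl', hlp⟩
  obtain ⟨c, hc, hcE⟩ := greedy univ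
  exact ⟨c, fun i => (hc i (mem_univ i)).1, by simpa using hcE⟩

/-! ### Properties of the cost function -/

theorem cost_le {a q : ℕ} {h : Fin a → ℕ} (H : Good h q) : cost a q ≤ ∑ i, h i :=
  Nat.sInf_le ⟨h, H, rfl⟩

theorem cost_spec (a q : ℕ) : ∃ h : Fin a → ℕ, Good h q ∧ ∑ i, h i = cost a q :=
  Nat.sInf_mem (s := {n : ℕ | ∃ h : Fin a → ℕ, Good h q ∧ ∑ i, h i = n})
    ⟨_, _, good_const a (s := q + 1) (by nlinarith), rfl⟩

theorem cost_mono (a : ℕ) : Monotone (cost a) := by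
  intro q r hqr
  obtain ⟨h, H, hs⟩ := cost_spec a r
  exact hs ▸ cost_le (H.mono_right hqr)

theorem mul_cost_le (a q k : ℕ) : k * cost a q ≤ cost a (q * k ^ 2) + k * a := by
  rcases Nat.eq_zero_or_pos k with rfl | hk
  · simp
  obtain ⟨h, H, hs⟩ := cost_spec a (q * k ^ 2)
  have h1 : ∀ i, h i ≤ (h i / k + 1) * k := fun i => (Nat.lt_div_mul_add hk).le.trans (by
    rw [add_mul, one_mul])
  have h2 := cost_le (H.of_blowup hk h1)
  calc k * cost a q ≤ k * ∑ i, (h i / k + 1) := Nat.mul_le_mul_left k h2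
    _ = ∑ i, k * (h i / k + 1) := mul_sum _ _ _
    _ ≤ ∑ i, (h i + k) := sum_le_sum fun i _ => by
        rw [mul_add, mul_one]
        exact Nat.add_le_add_right (Nat.mul_div_le _ _) _
    _ = cost a (q * k ^ 2) + k * a := by
        rw [sum_add_distrib, hs, sum_const, card_univ, Fintype.card_fin, smul_eq_mul, mul_comm a k]

theorem exists_cost_bound (a : ℕ) :
    ∃ C : ℝ, 0 ≤ C ∧ ∀ q : ℕ, 1 ≤ q → (cost a q : ℝ) ≤ C * Real.sqrt q := by
  refine ⟨a * ((2 + 2 * a) * 2), by positivity, fun q hq => ?_⟩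
  have h1 := cost_le (good_const a (q := q) (s := Nat.sqrt q + 1) (Nat.lt_succ_sqrt' q))
  rw [sum_const, card_univ, Fintype.card_fin, smul_eq_mul] at h1
  have h2 : (cost a q : ℝ) ≤ a * ((2 + 2 * a) * (Nat.sqrt q + 1)) := by exact_mod_cast h1
  have h3 : (Nat.sqrt q : ℝ) ≤ Real.sqrt q := Real.nat_sqrt_le_real_sqrt
  have h4 : 1 ≤ Real.sqrt q := by
    rw [Real.one_le_sqrt]
    exact_mod_cast hq
  calc (cost a q : ℝ) ≤ a * ((2 + 2 * a) * (Nat.sqrt q + 1)) := h2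
    _ ≤ a * ((2 + 2 * a) * (2 * Real.sqrt q)) := by gcongr; linarith
    _ = _ := by ring

/-! ### Comparison with the sum choice number -/

theorem Good.choosable {a q : ℕ} {h : Fin a → ℕ} (H : Good h q) :
    Choosable (completeBipartiteGraph (Fin a) (Fin q)) (Sum.elim h fun _ => 2) := by
  intro L hL
  have h2 : ∀ v : Fin q, ∃ p : ℕ × ℕ, p.1 ≠ p.2 ∧ L (Sum.inr v) = {p.1, p.2} := by
    intro v
    obtain ⟨x, y, hxy, he⟩ := card_eq_two.1 (hL (Sum.inr v))
    exact ⟨(x, y), hxy, he⟩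
  choose P hP hLP using h2
  obtain ⟨c, hc, hcE⟩ := H (fun i => L (Sum.inl i)) (fun i => (hL (Sum.inl i)).ge)
    (univ.image P) (by simpa using card_image_le (s := (univ : Finset (Fin q))) (f := P))
    (by simpa using hP)
  have hd : ∀ v : Fin q, ∃ x ∈ L (Sum.inr v), ∀ i, c i ≠ x := by
    intro v
    by_contra! hcon
    exact hcE (P v) (mem_image_of_mem _ (mem_univ v))
      ⟨hcon _ (by simp [hLP]), hcon _ (by simp [hLP])⟩
  choose d hdL hdc using hd
  refine ⟨Sum.elim c d, ?_, ?_⟩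
  · rintro (i | v)
    · exact hc i
    · exact hdL v
  · rintro (i | v) (j | w) huv
    · simp at huv
    · exact hdc w i
    · exact (hdc v j).symm
    · simp at huv

/-- The vertices of `Q` with a single color can forbid as many colors as there are such vertices, so
every list on `A` has to be at least that long. -/
theorem card_ones_le {a q : ℕ} {f : Fin a ⊕ Fin q → ℕ}
    (H : Choosable (completeBipartiteGraph (Fin a) (Fin q)) f) (i : Fin a) :
    (univ.filter fun v : Fin q => f (Sum.inr v) = 1).card ≤ f (Sum.inl i) := by
  set O := univ.filter fun v : Fin q => f (Sum.inr v) = 1 with hO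
  by_contra! hcon
  have h1 : f (Sum.inl i) ≤ (O.image fun v : Fin q => (v : ℕ)).card := by
    rw [card_image_of_injective _ Fin.val_injective]
    exact hcon.le
  obtain ⟨Z, hZ, hZc⟩ := exists_subset_card_eq h1
  obtain ⟨c, hc, hadj⟩ := H
    (Sum.elim (fun j => if j = i then Z else range (f (Sum.inl j)))
      fun v => if f (Sum.inr v) = 1 then {(v : ℕ)} else range (f (Sum.inr v)))
    (by
      rintro (j | v)
      · by_cases hj : j = i
        · subst hj
          simpa using hZc
        · simp [hj]
      · by_cases hv : f (Sum.inr v) = 1 <;> simp [hv])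
  have h2 := hc (Sum.inl i)
  simp only [Sum.elim_inl, if_true] at h2
  obtain ⟨v, hv, hvc⟩ := mem_image.1 (hZ h2)
  have h3 := hc (Sum.inr v)
  rw [hO, mem_filter] at hv
  simp only [Sum.elim_inr, hv.2, if_true, mem_singleton] at h3
  exact hadj (Sum.inl i) (Sum.inr v) (by simp) (hvc.symm.trans h3.symm)

/-- A sufficient `f` yields a sufficient function with two colors on each vertex of `Q`, on the
vertices of `Q` where `f` equals two. The single-color vertices are used to delete fresh colors added
to all the lists on `A`. -/
theorem good_of_choosable {a q : ℕ} {f : Fin a ⊕ Fin q → ℕ}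
    (H : Choosable (completeBipartiteGraph (Fin a) (Fin q)) f) :
    Good (fun i => f (Sum.inl i) - (univ.filter fun v : Fin q => f (Sum.inr v) = 1).card)
      (univ.filter fun v : Fin q => f (Sum.inr v) = 2).card := by
  have hle := card_ones_le H
  set O := univ.filter fun v : Fin q => f (Sum.inr v) = 1 with hO
  set W := univ.filter fun v : Fin q => f (Sum.inr v) = 2 with hW
  intro L hL E hE hloop
  choose L' hL' hcard using fun i => exists_subset_card_eq (hL i)
  -- colors from `N` onwards do not occur in the given lists
  obtain ⟨N, hN⟩ : ∃ N : ℕ, ∀ i, ∀ x ∈ L' i, x < N := by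
    refine ⟨(univ.biUnion L').sup id + 1, fun i x hx => Nat.lt_succ_of_le ?_⟩
    exact le_sup (f := id) (mem_biUnion.2 ⟨i, mem_univ i, hx⟩)
  let Z : Finset ℕ := O.image fun v : Fin q => N + (v : ℕ)
  have hZc : Z.card = O.card :=
    card_image_of_injective _ fun v w hvw => Fin.ext (Nat.add_left_cancel hvw)
  have hZd : ∀ i, Disjoint (L' i) Z := by
    intro i
    rw [Finset.disjoint_left]
    intro x hx hxZ
    obtain ⟨v, -, hv⟩ := mem_image.1 hxZ
    have := hN i x hx
    omega
  -- a distinct two-color vertex of `Q` for each edge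
  obtain ⟨ψ⟩ : Nonempty (E ↪ W) := by
    apply Function.Embedding.nonempty_of_card_le
    simpa using hE
  have hψ2 : ∀ e : E, f (Sum.inr (ψ e : Fin q)) = 2 := fun e => (mem_filter.1 (ψ e).2).2
  classical
  let M : Fin q → Finset ℕ := fun v =>
    if h : ∃ e : E, (ψ e : Fin q) = v then {h.choose.1.1, h.choose.1.2}
    else if f (Sum.inr v) = 1 then {N + (v : ℕ)} else range (f (Sum.inr v))
  have hMψ : ∀ e : E, M (ψ e) = {e.1.1, e.1.2} := by
    intro e
    have hex : ∃ e' : E, (ψ e' : Fin q) = ψ e := ⟨e, rfl⟩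
    have : hex.choose = e := ψ.injective (Subtype.ext hex.choose_spec)
    simp only [M, dif_pos hex, this]
  have hMO : ∀ v, f (Sum.inr v) = 1 → M v = {N + (v : ℕ)} := by
    intro v hv
    have hex : ¬ ∃ e : E, (ψ e : Fin q) = v := by
      rintro ⟨e, rfl⟩
      have := hψ2 e
      omega
    simp only [M, dif_neg hex, if_pos hv]
  obtain ⟨c, hc, hadj⟩ := H (Sum.elim (fun i => L' i ∪ Z) M) (by
    rintro (i | v)
    · simp only [Sum.elim_inl]
      rw [card_union_of_disjoint (hZd i), hcard, hZc]
      exact Nat.sub_add_cancel (hle i)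
    · simp only [Sum.elim_inr]
      by_cases hex : ∃ e : E, (ψ e : Fin q) = v
      · obtain ⟨e, rfl⟩ := hex
        rw [hMψ, hψ2, card_pair (hloop _ e.2)]
      · by_cases hv : f (Sum.inr v) = 1
        · rw [hMO v hv, hv, card_singleton]
        · simp only [M, dif_neg hex, if_neg hv, card_range])
  refine ⟨fun i => c (Sum.inl i), ?_, ?_⟩
  · intro i
    have h1 := hc (Sum.inl i)
    rcases mem_union.1 h1 with h1 | h1
    · exact hL' i h1
    · exfalso
      obtain ⟨v, hv, hvc⟩ := mem_image.1 h1
      have h3 := hc (Sum.inr v)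
      rw [Sum.elim_inr, hMO v (mem_filter.1 hv).2, mem_singleton] at h3
      exact hadj (Sum.inl i) (Sum.inr v) (by simp) (hvc.symm.trans h3.symm)
  · rintro p hp ⟨⟨i, hi⟩, j, hj⟩
    have h3 := hc (Sum.inr (ψ ⟨p, hp⟩ : Fin q))
    rw [Sum.elim_inr, hMψ, mem_insert, mem_singleton] at h3
    rcases h3 with h3 | h3
    · exact hadj (Sum.inl i) (Sum.inr (ψ ⟨p, hp⟩ : Fin q)) (by simp) (hi.trans h3.symm)
    · exact hadj (Sum.inl j) (Sum.inr (ψ ⟨p, hp⟩ : Fin q)) (by simp) (hj.trans h3.symm)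

theorem Choosable.pos {V : Type*} {G : SimpleGraph V} {f : V → ℕ} (H : Choosable G f) (v : V) :
    0 < f v := by
  obtain ⟨c, hc, -⟩ := H (fun v => range (f v)) fun v => card_range _
  exact (Nat.zero_le _).trans_lt (mem_range.1 (hc v))

/-- Here `d` counts the vertices of `Q` on which `f` differs from two. -/
theorem exists_good_of_choosable {a q : ℕ} (ha : 2 ≤ a) {f : Fin a ⊕ Fin q → ℕ}
    (H : Choosable (completeBipartiteGraph (Fin a) (Fin q)) f) :
    ∃ d ≤ q, 2 * q + d + cost a (q - d) ≤ ∑ v, f v := by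
  have hgood := cost_le (good_of_choosable H)
  have hle := card_ones_le H
  set O := univ.filter fun v : Fin q => f (Sum.inr v) = 1 with hO
  set W := univ.filter fun v : Fin q => f (Sum.inr v) = 2 with hW
  have hsplit : W.card + (univ.filter fun v : Fin q => ¬ f (Sum.inr v) = 2).card = q := by
    rw [hW, card_filter_add_card_filter_not, card_univ, Fintype.card_fin]
  set D := univ.filter fun v : Fin q => ¬ f (Sum.inr v) = 2 with hD
  refine ⟨D.card, by omega, ?_⟩
  have hWq : q - D.card = W.card := by omega
  rw [hWq]
  -- a single color costs one less than two colors, a list of three or more at least one more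
  have hQ : 2 * q + D.card ≤ ∑ v : Fin q, f (Sum.inr v) + 2 * O.card := by
    have hterm : ∀ v : Fin q, 2 + (if ¬ f (Sum.inr v) = 2 then 1 else 0) ≤
        f (Sum.inr v) + 2 * (if f (Sum.inr v) = 1 then 1 else 0) := by
      intro v
      have := H.pos (Sum.inr v)
      split_ifs <;> omega
    have := sum_le_sum fun v (_ : v ∈ (univ : Finset (Fin q))) => hterm v
    rw [sum_add_distrib, sum_add_distrib, ← mul_sum, ← card_filter, ← card_filter, sum_const,
      card_univ, Fintype.card_fin, smul_eq_mul] at this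
    rw [mul_comm 2 q]
    exact this
  have hA : ∑ i : Fin a, (f (Sum.inl i) - O.card) + a * O.card = ∑ i : Fin a, f (Sum.inl i) := by
    rw [← sum_congr rfl fun i _ => Nat.sub_add_cancel (hle i), sum_add_distrib, sum_const,
      card_univ, Fintype.card_fin, smul_eq_mul]
  have h2 := Nat.mul_le_mul_right O.card ha
  rw [Fintype.sum_sum_type]
  omega

theorem sumChoice_le (a q : ℕ) :
    sumChoice (completeBipartiteGraph (Fin a) (Fin q)) ≤ 2 * q + cost a q := by
  obtain ⟨h, H, hs⟩ := cost_spec a q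
  refine Nat.sInf_le ⟨_, H.choosable, ?_⟩
  simp [hs]
  ring

theorem le_sumChoice {a : ℕ} (ha : 2 ≤ a) (q : ℕ) :
    ∃ d ≤ q, 2 * q + d + cost a (q - d) ≤
      sumChoice (completeBipartiteGraph (Fin a) (Fin q)) := by
  obtain ⟨h, H, -⟩ := cost_spec a q
  obtain ⟨f, hf, hs⟩ := Nat.sInf_mem
    (s := {n : ℕ | ∃ f : Fin a ⊕ Fin q → ℕ,
      Choosable (completeBipartiteGraph (Fin a) (Fin q)) f ∧ ∑ v, f v = n})
    ⟨_, _, H.choosable, rfl⟩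
  obtain ⟨d, hd, hle⟩ := exists_good_of_choosable ha hf
  exact ⟨d, hd, hle.trans hs.le⟩

/-! ### The limit -/

/-- If `g ≤ S√q + b` and `t√q - O(1) ≤ g` for all `t < S`, then `g / √q` tends to `S`. -/
theorem tendsto_div_sqrt {g : ℕ → ℝ} {S b : ℝ}
    (hup : ∀ q : ℕ, 1 ≤ q → g q ≤ S * Real.sqrt q + b)
    (hlow : ∀ t < S, ∃ K : ℝ, ∀ q : ℕ, 1 ≤ q → t * Real.sqrt q - K ≤ g q) :
    Filter.Tendsto (fun q : ℕ => g q / Real.sqrt q) Filter.atTop (nhds S) := by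
  have hsqrt : Filter.Tendsto (fun q : ℕ => Real.sqrt q) Filter.atTop Filter.atTop :=
    Real.tendsto_sqrt_atTop.comp tendsto_natCast_atTop_atTop
  have hz : ∀ K : ℝ, Filter.Tendsto (fun q : ℕ => K / Real.sqrt q) Filter.atTop (nhds 0) :=
    fun K => hsqrt.const_div_atTop K
  rw [tendsto_order]
  constructor
  · intro t ht
    obtain ⟨t', ht', ht'S⟩ := exists_between ht
    obtain ⟨K, hK⟩ := hlow t' ht'S
    filter_upwards [(hz K).eventually (gt_mem_nhds (sub_pos.2 ht')), Filter.eventually_ge_atTop 1]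
      with q hq hq1
    have hpos : 0 < Real.sqrt q := Real.sqrt_pos.2 (by exact_mod_cast hq1)
    have := hK q hq1
    rw [div_lt_iff₀ hpos] at hq
    rw [lt_div_iff₀ hpos]
    linarith
  · intro t ht
    filter_upwards [(hz b).eventually (gt_mem_nhds (sub_pos.2 ht)), Filter.eventually_ge_atTop 1]
      with q hq hq1
    have hpos : 0 < Real.sqrt q := Real.sqrt_pos.2 (by exact_mod_cast hq1)
    have := hup q hq1
    rw [div_lt_iff₀ hpos] at hq
    rw [div_lt_iff₀ hpos]
    linarith

/-- The blow-up inequality with `k = ⌊√(q / r)⌋`: one value of the cost function bounds all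
others from below. -/
theorem cost_lower (a : ℕ) {r : ℕ} (hr : 1 ≤ r) (q : ℕ)
    (h0 : (0 : ℝ) ≤ (cost a r : ℝ) - a) :
    ((cost a r : ℝ) - a) / Real.sqrt r * Real.sqrt q - (cost a r - a) ≤ cost a q := by
  have hrpos : (0 : ℝ) < r := by exact_mod_cast hr
  set x : ℝ := Real.sqrt ((q : ℝ) / r) with hx
  set k : ℕ := ⌊x⌋₊ with hk
  have hkx : (k : ℝ) ≤ x := Nat.floor_le (Real.sqrt_nonneg _)
  have hxk : x < k + 1 := Nat.lt_floor_add_one _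
  have hkq : r * k ^ 2 ≤ q := by
    have h1 : (k : ℝ) ^ 2 ≤ (q : ℝ) / r := by
      calc (k : ℝ) ^ 2 ≤ x ^ 2 := by gcongr
        _ = (q : ℝ) / r := Real.sq_sqrt (by positivity)
    rw [le_div_iff₀ hrpos] at h1
    have h2 : (r : ℝ) * k ^ 2 ≤ q := by linarith
    exact_mod_cast h2
  have h3 : (k : ℝ) * cost a r ≤ cost a q + k * a := by
    exact_mod_cast (mul_cost_le a r k).trans (Nat.add_le_add_right (cost_mono a hkq) _)
  have h4 : ((cost a r : ℝ) - a) / Real.sqrt r * Real.sqrt q = ((cost a r : ℝ) - a) * x := by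
    rw [hx, Real.sqrt_div' _ hrpos.le]
    ring
  rw [h4]
  nlinarith

/-- Theorem (limit exists): for every fixed `a ≥ 2` the limit
`lim_{q→∞} (χ_sc(K_{a,q}) − 2q)/√q` exists. -/
theorem sumChoice_limit_exists (a : ℕ) (ha : 2 ≤ a) :
    ∃ l : ℝ, Filter.Tendsto
      (fun q : ℕ =>
        ((sumChoice (completeBipartiteGraph (Fin a) (Fin q)) : ℝ) - 2 * q) / Real.sqrt q)
      Filter.atTop (nhds l) := by
  obtain ⟨C, hC0, hC⟩ := exists_cost_bound a
  let T : ℕ → ℝ := fun r => ((cost a (r + 1) : ℝ) - a) / Real.sqrt ((r + 1 : ℕ) : ℝ)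
  have hspos : ∀ q : ℕ, 1 ≤ q → 0 < Real.sqrt q := fun q hq =>
    Real.sqrt_pos.2 (by exact_mod_cast hq)
  have hbdd : BddAbove (Set.range T) := by
    refine ⟨C, ?_⟩
    rintro _ ⟨r, rfl⟩
    change ((cost a (r + 1) : ℝ) - a) / Real.sqrt ((r + 1 : ℕ) : ℝ) ≤ C
    rw [div_le_iff₀ (hspos (r + 1) (by omega))]
    have h1 := hC (r + 1) (by omega)
    have h2 : (0 : ℝ) ≤ a := a.cast_nonneg
    linarith
  refine ⟨⨆ r, T r, tendsto_div_sqrt (b := a) ?_ ?_⟩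
  · intro q hq
    obtain ⟨r, rfl⟩ : ∃ r, q = r + 1 := ⟨q - 1, by omega⟩
    have h1 : T r ≤ ⨆ r, T r := le_ciSup hbdd r
    have h2 : (sumChoice (completeBipartiteGraph (Fin a) (Fin (r + 1))) : ℝ) ≤
        2 * ((r + 1 : ℕ) : ℝ) + cost a (r + 1) := by exact_mod_cast sumChoice_le a (r + 1)
    have h3 := (div_le_iff₀ (hspos (r + 1) hq)).1 h1
    linarith
  · intro t ht
    obtain ⟨r, hr⟩ := exists_lt_of_lt_ciSup ht
    set u : ℝ := (cost a (r + 1) : ℝ) - a with hu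
    have hTr : T r = u / Real.sqrt ((r + 1 : ℕ) : ℝ) := rfl
    have hsr := hspos (r + 1) (by omega)
    refine ⟨|T r| * C + |u|, fun q hq => ?_⟩
    have hsq := hspos q hq
    obtain ⟨d, hd, hlow⟩ := le_sumChoice ha q
    have hlow' : 2 * (q : ℝ) + d + cost a (q - d) ≤
        sumChoice (completeBipartiteGraph (Fin a) (Fin q)) := by exact_mod_cast hlow
    have hup : (sumChoice (completeBipartiteGraph (Fin a) (Fin q)) : ℝ) ≤
        2 * q + cost a q := by exact_mod_cast sumChoice_le a q
    have hcq := hC q hq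
    have hc0 : (0 : ℝ) ≤ cost a (q - d) := Nat.cast_nonneg _
    have hd0 : (0 : ℝ) ≤ d := Nat.cast_nonneg _
    have hdC : (d : ℝ) ≤ C * Real.sqrt q := by linarith
    have htT : t * Real.sqrt q ≤ T r * Real.sqrt q := by gcongr
    rcases le_or_gt 0 u with h0 | h0
    · have hT0 : 0 ≤ T r := div_nonneg h0 hsr.le
      have h1 := cost_lower a (r := r + 1) (by omega) (q - d) h0
      rw [← hu, ← hTr] at h1
      -- `(√q - C)² ≤ q - C√q ≤ q - d` once `C ≤ √q`
      have h2 : Real.sqrt q - C ≤ Real.sqrt ((q - d : ℕ) : ℝ) := by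
        rw [Nat.cast_sub hd]
        rcases le_or_gt (Real.sqrt q) C with hle | hgt
        · exact (sub_nonpos.2 hle).trans (Real.sqrt_nonneg _)
        · apply Real.le_sqrt_of_sq_le
          have h3 : Real.sqrt q ^ 2 = q := Real.sq_sqrt q.cast_nonneg
          nlinarith
      rw [abs_of_nonneg hT0, abs_of_nonneg h0]
      nlinarith [mul_le_mul_of_nonneg_left h2 hT0]
    · have hT0 : T r ≤ 0 := div_nonpos_of_nonpos_of_nonneg h0.le hsr.le
      have h1 : T r * Real.sqrt q ≤ 0 := mul_nonpos_of_nonpos_of_nonneg hT0 hsq.le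
      have h2 : 0 ≤ |T r| * C := by positivity
      have h3 := abs_nonneg u
      linarith
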